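/- The classification error function E is continuous on ℝ^p \ {0}. -/

import Mathlib

open MeasureTheory ProbabilityTheory Matrix Filter Set

noncomputable def Phi (t : ℝ) : ℝ := ((gaussianReal 0 1) (Set.Iic t)).toReal
noncomputable def calE (r g : ℝ) : ℝ :=
  if g = 1 then Phi (-(|r| / 2))
  else
    1/2
      + (1/2) * Phi ((r - g * Real.sqrt (r^2 + (g^2 - 1) * Real.log (g^2))) / (g^2 - 1))
      - (1/2) * Phi ((r + g * Real.sqrt (r^2 + (g^2 - 1) * Real.log (g^2))) / (g^2 - 1))
      + (1/2) * Phi ((r * g + Real.sqrt (r^2 + (g^2 - 1) * Real.log (g^2))) / (g^2 - 1))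
      - (1/2) * Phi ((r * g - Real.sqrt (r^2 + (g^2 - 1) * Real.log (g^2))) / (g^2 - 1))
noncomputable def Evec {p : ℕ} (μ0 μ1 : Fin p → ℝ) (S0 S1 : Matrix (Fin p) (Fin p) ℝ)
    (α : Fin p → ℝ) : ℝ :=
  calE ((dotProduct α μ0 - dotProduct α μ1) / Real.sqrt (dotProduct α (S1.mulVec α)))
    (Real.sqrt (dotProduct α (S0.mulVec α)) / Real.sqrt (dotProduct α (S1.mulVec α)))

/-!
Only `g = 1` is delicate: there the formula for `calE` divides by `g ^ 2 - 1`. The four arguments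
of `Phi` come from the two points where the densities of `N(0, 1)` and `N(r, g ^ 2)` cross. Take
`r ≥ 0`, which the symmetry `r ↦ -r` allows. As `g → 1` the far crossing point may escape to
infinity, but its two arguments differ by `(r - √Δ) / (g + 1) → 0`, so it contributes nothing in the
limit because `Phi` is Lipschitz. At `r > 0` the arguments at the near crossing point extend
continuously to `g = 1` once they are rationalised. As `(r, g) → (0, 1)` the two near arguments
also approach each other, and the error tends to `1 / 2`.
-/

section DistributionFunction

variable {μ : Measure ℝ} [IsFiniteMeasure μ]

lemma lipschitzWith_measureReal_Iic_of_le_smul_volume {K : NNReal} (hμ : μ ≤ K • volume) :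
    LipschitzWith K fun t ↦ μ.real (Iic t) := by
  refine LipschitzWith.of_le_add_mul K fun x y ↦ ?_
  have hIoc : μ.real (Ioc y x) ≤ K * dist x y :=
    calc μ.real (Ioc y x) ≤ (K • volume : Measure ℝ).real (Ioc y x) :=
          ENNReal.toReal_mono (ENNReal.mul_ne_top ENNReal.coe_ne_top measure_Ioc_lt_top.ne) (hμ _)
      _ = K * max (x - y) 0 := by
          rw [measureReal_nnreal_smul_apply, Real.volume_real_Ioc]
      _ ≤ K * dist x y := by
          gcongr
          exact max_le (le_abs_self _) dist_nonneg
  calc μ.real (Iic x) ≤ μ.real (Iic y ∪ Ioc y x) :=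
        measureReal_mono Iic_subset_Iic_union_Ioc
    _ ≤ μ.real (Iic y) + μ.real (Ioc y x) := measureReal_union_le _ _
    _ ≤ μ.real (Iic y) + K * dist x y := by gcongr

lemma measureReal_Iic_neg [NullSingletonClass μ] [μ.IsNegInvariant] (t : ℝ) :
    μ.real (Iic (-t)) = μ.real univ - μ.real (Iic t) :=
  calc μ.real (Iic (-t)) = μ.real (Ici t) := by
        rw [← neg_Ici, measureReal_def, Measure.measure_neg, measureReal_def]
    _ = μ.real (Iic t)ᶜ := by rw [compl_Iic, measureReal_congr Ioi_ae_eq_Ici]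
    _ = μ.real univ - μ.real (Iic t) := measureReal_compl measurableSet_Iic

end DistributionFunction

lemma gaussianPDFReal_le (m : ℝ) (v : NNReal) (x : ℝ) :
    gaussianPDFReal m v x ≤ (√(2 * Real.pi * v))⁻¹ := by
  refine mul_le_of_le_one_right (by positivity) (Real.exp_le_one_iff.2 ?_)
  exact div_nonpos_of_nonpos_of_nonneg (neg_nonpos.2 (sq_nonneg _)) (by positivity)

lemma gaussianReal_le_smul_volume (m : ℝ) {v : NNReal} (hv : v ≠ 0) :
    gaussianReal m v ≤ (√(2 * Real.pi * v))⁻¹.toNNReal • volume := by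
  rw [gaussianReal_of_var_ne_zero m hv]
  calc volume.withDensity (gaussianPDF m v)
      ≤ volume.withDensity fun _ ↦ ((√(2 * Real.pi * v))⁻¹.toNNReal : ENNReal) :=
        withDensity_mono (ae_of_all _ fun x ↦ ENNReal.ofReal_le_ofReal (gaussianPDFReal_le m v x))
    _ = (√(2 * Real.pi * v))⁻¹.toNNReal • volume := withDensity_const _

instance isNegInvariant_gaussianReal_zero (v : NNReal) : (gaussianReal 0 v).IsNegInvariant :=
  ⟨gaussianReal_map_neg.trans (by rw [neg_zero])⟩

lemma lipschitzWith_Phi : LipschitzWith 1 Phi := by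
  refine (lipschitzWith_measureReal_Iic_of_le_smul_volume
    (gaussianReal_le_smul_volume 0 one_ne_zero)).weaken ?_
  rw [Real.toNNReal_le_one]
  refine inv_le_one_of_one_le₀ (Real.one_le_sqrt.2 ?_)
  push_cast
  linarith [Real.pi_gt_three]

@[fun_prop]
lemma continuous_Phi : Continuous Phi := lipschitzWith_Phi.continuous

lemma abs_Phi_sub_Phi_le (a b : ℝ) : |Phi a - Phi b| ≤ |a - b| := by
  simpa [Real.dist_eq] using lipschitzWith_Phi.dist_le_mul a b

lemma Phi_neg (t : ℝ) : Phi (-t) = 1 - Phi t := by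
  have := nullSingletonClass_gaussianReal (μ := 0) one_ne_zero
  simpa [Phi, measureReal_def] using measureReal_Iic_neg (μ := gaussianReal 0 1) t

lemma Phi_zero : Phi 0 = 1 / 2 := by
  have h := Phi_neg 0
  rw [neg_zero] at h
  linarith

lemma sub_one_mul_log_nonneg {x : ℝ} (hx : 0 ≤ x) : 0 ≤ (x - 1) * Real.log x := by
  rcases le_total 1 x with h | h
  · exact mul_nonneg (sub_nonneg.2 h) (Real.log_nonneg h)
  · exact mul_nonneg_of_nonpos_of_nonpos (sub_nonpos.2 h) (Real.log_nonpos hx h)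

/-- The quantity `Δ(r, g)`. Up to the factor `4 * g ^ 2`, it is the discriminant of the quadratic
equation for the points where the densities of `N(0, 1)` and `N(r, g ^ 2)` cross. -/
noncomputable def crossingDiscr (r g : ℝ) : ℝ := r ^ 2 + (g ^ 2 - 1) * Real.log (g ^ 2)

lemma crossingDiscr_one_right (r : ℝ) : crossingDiscr r 1 = r ^ 2 := by
  simp [crossingDiscr]

lemma crossingDiscr_neg_left (r g : ℝ) : crossingDiscr (-r) g = crossingDiscr r g := by
  simp [crossingDiscr]

lemma sq_le_crossingDiscr (r g : ℝ) : r ^ 2 ≤ crossingDiscr r g :=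
  le_add_of_nonneg_right (sub_one_mul_log_nonneg (sq_nonneg g))

lemma abs_le_sqrt_crossingDiscr (r g : ℝ) : |r| ≤ √(crossingDiscr r g) :=
  Real.abs_le_sqrt (sq_le_crossingDiscr r g)

lemma sq_sqrt_crossingDiscr (r g : ℝ) : √(crossingDiscr r g) ^ 2 = crossingDiscr r g :=
  Real.sq_sqrt ((sq_nonneg r).trans (sq_le_crossingDiscr r g))

lemma continuousAt_sqrt_crossingDiscr {q : ℝ × ℝ} (hg : q.2 ≠ 0) :
    ContinuousAt (fun q : ℝ × ℝ ↦ √(crossingDiscr q.1 q.2)) q := by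
  have hlog : q.2 ^ 2 ≠ 0 := pow_ne_zero 2 hg
  unfold crossingDiscr
  fun_prop (disch := assumption)

lemma calE_one_right (r : ℝ) : calE r 1 = Phi (-(|r| / 2)) := if_pos rfl

lemma calE_of_ne_one (r : ℝ) {g : ℝ} (hg : g ≠ 1) :
    calE r g = 1 / 2
      + (Phi ((r - g * √(crossingDiscr r g)) / (g ^ 2 - 1))
        - Phi ((r * g - √(crossingDiscr r g)) / (g ^ 2 - 1))) / 2
      + (Phi ((r * g + √(crossingDiscr r g)) / (g ^ 2 - 1))
        - Phi ((r + g * √(crossingDiscr r g)) / (g ^ 2 - 1))) / 2 := by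
  rw [calE, if_neg hg, crossingDiscr]
  ring

lemma calE_neg_left (r g : ℝ) : calE (-r) g = calE r g := by
  rcases eq_or_ne g 1 with rfl | hg
  · simp only [calE_one_right, abs_neg]
  rw [calE_of_ne_one _ hg, calE_of_ne_one _ hg, crossingDiscr_neg_left]
  set s := √(crossingDiscr r g)
  rw [show (-r - g * s) / (g ^ 2 - 1) = -((r + g * s) / (g ^ 2 - 1)) by ring,
    show (-r * g - s) / (g ^ 2 - 1) = -((r * g + s) / (g ^ 2 - 1)) by ring,
    show (-r * g + s) / (g ^ 2 - 1) = -((r * g - s) / (g ^ 2 - 1)) by ring,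
    show (-r + g * s) / (g ^ 2 - 1) = -((r - g * s) / (g ^ 2 - 1)) by ring]
  simp only [Phi_neg]
  ring

lemma sq_sub_one_ne_zero {g : ℝ} (hg : 0 < g) (hg1 : g ≠ 1) : g ^ 2 - 1 ≠ 0 :=
  sub_ne_zero.2 ((pow_eq_one_iff_of_nonneg hg.le two_ne_zero).not.2 hg1)

lemma abs_Phi_div_sub_Phi_div_le {g : ℝ} (hg : 0 < g) (hg1 : g ≠ 1) (r s : ℝ) :
    |Phi ((r * g + s) / (g ^ 2 - 1)) - Phi ((r + g * s) / (g ^ 2 - 1))| ≤ |r - s| / (g + 1) := by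
  have hsub : (r * g + s) / (g ^ 2 - 1) - (r + g * s) / (g ^ 2 - 1) = (r - s) / (g + 1) := by
    rw [← sub_div, div_eq_div_iff (sq_sub_one_ne_zero hg hg1) (by positivity)]
    ring
  calc _ ≤ |(r * g + s) / (g ^ 2 - 1) - (r + g * s) / (g ^ 2 - 1)| := abs_Phi_sub_Phi_le _ _
    _ = |r - s| / (g + 1) := by rw [hsub, abs_div, abs_of_pos (a := g + 1) (by positivity)]

lemma abs_calE_sub_half_le (r : ℝ) {g : ℝ} (hg : 0 < g) :
    |calE r g - 1 / 2| ≤ √(crossingDiscr r g) / (g + 1) := by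
  rcases eq_or_ne g 1 with rfl | hg1
  · calc |calE r 1 - 1 / 2| = |Phi (-(|r| / 2)) - Phi 0| := by rw [calE_one_right, Phi_zero]
      _ ≤ |-(|r| / 2) - 0| := abs_Phi_sub_Phi_le _ _
      _ = √(crossingDiscr r 1) / (1 + 1) := by
          rw [crossingDiscr_one_right, Real.sqrt_sq_eq_abs, sub_zero, abs_neg, abs_div, abs_abs,
            abs_two, one_add_one_eq_two]
  have hfar := abs_Phi_div_sub_Phi_div_le hg hg1 r √(crossingDiscr r g)
  have hnear := abs_Phi_div_sub_Phi_div_le hg hg1 r (-√(crossingDiscr r g))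
  obtain ⟨hr₁, hr₂⟩ := abs_le.1 (abs_le_sqrt_crossingDiscr r g)
  rw [calE_of_ne_one r hg1]
  set s := √(crossingDiscr r g)
  rw [mul_neg, ← sub_eq_add_neg, ← sub_eq_add_neg, sub_neg_eq_add, abs_sub_comm,
    abs_of_nonneg (a := r + s) (by linarith)] at hnear
  rw [abs_of_nonpos (a := r - s) (by linarith)] at hfar
  have hsum : (r + s) / (g + 1) + -(r - s) / (g + 1) = 2 * (s / (g + 1)) := by ring
  rw [abs_le] at hfar hnear ⊢
  constructor <;> linarith

/-- The error of the rule that separates `N(0, 1)` and `N(r, g ^ 2)` at the near crossing point of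
their densities alone, for `0 < r` and `0 < g`. The arguments of `Phi` are those of `calE`,
rationalised so that the formula also makes sense at `g = 1`. -/
noncomputable def nearThresholdError (r g : ℝ) : ℝ :=
  1 / 2 + (Phi (-(r ^ 2 + g ^ 2 * Real.log (g ^ 2)) / (r + g * √(crossingDiscr r g)))
    - Phi ((r ^ 2 - Real.log (g ^ 2)) / (r * g + √(crossingDiscr r g)))) / 2

lemma nearThresholdError_one_right {r : ℝ} (hr : 0 < r) : nearThresholdError r 1 = calE r 1 := by
  have hhalf : r ^ 2 / (r + r) = r / 2 := by
    field_simp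
    norm_num
  simp only [nearThresholdError, calE_one_right, crossingDiscr_one_right, Real.sqrt_sq hr.le,
    abs_of_pos hr, one_pow, Real.log_one, mul_zero, add_zero, sub_zero, one_mul, mul_one, neg_div,
    hhalf, Phi_neg]
  ring

lemma nearThresholdError_of_ne_one {r g : ℝ} (hr : 0 < r) (hg : 0 < g) (hg1 : g ≠ 1) :
    nearThresholdError r g = 1 / 2
      + (Phi ((r - g * √(crossingDiscr r g)) / (g ^ 2 - 1))
        - Phi ((r * g - √(crossingDiscr r g)) / (g ^ 2 - 1))) / 2 := by
  have hsq : √(crossingDiscr r g) ^ 2 = r ^ 2 + (g ^ 2 - 1) * Real.log (g ^ 2) :=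
    sq_sqrt_crossingDiscr r g
  have hd := sq_sub_one_ne_zero hg hg1
  rw [nearThresholdError]
  congr 4
  · rw [div_eq_div_iff (by positivity) hd]
    linear_combination g ^ 2 * hsq
  · rw [div_eq_div_iff (by positivity) hd]
    linear_combination hsq

lemma abs_calE_sub_nearThresholdError_le {r g : ℝ} (hr : 0 < r) (hg : 0 < g) :
    |calE r g - nearThresholdError r g| ≤ |r - √(crossingDiscr r g)| / (g + 1) / 2 := by
  rcases eq_or_ne g 1 with rfl | hg1
  · rw [nearThresholdError_one_right hr, sub_self, abs_zero]
    positivity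
  rw [calE_of_ne_one r hg1, nearThresholdError_of_ne_one hr hg hg1, add_sub_cancel_left, abs_div,
    abs_two]
  gcongr
  exact abs_Phi_div_sub_Phi_div_le hg hg1 r _

lemma continuousAt_nearThresholdError {q : ℝ × ℝ} (hr : 0 < q.1) (hg : 0 < q.2) :
    ContinuousAt (fun q : ℝ × ℝ ↦ nearThresholdError q.1 q.2) q := by
  have hs := continuousAt_sqrt_crossingDiscr hg.ne'
  have hlog : q.2 ^ 2 ≠ 0 := by positivity
  have hden₁ : q.1 + q.2 * √(crossingDiscr q.1 q.2) ≠ 0 := by positivity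
  have hden₂ : q.1 * q.2 + √(crossingDiscr q.1 q.2) ≠ 0 := by positivity
  unfold nearThresholdError
  fun_prop (disch := assumption)

lemma continuousAt_calE_of_ne_one {q : ℝ × ℝ} (hg : 0 < q.2) (hg1 : q.2 ≠ 1) :
    ContinuousAt (fun q : ℝ × ℝ ↦ calE q.1 q.2) q := by
  have hs := continuousAt_sqrt_crossingDiscr hg.ne'
  have hd := sq_sub_one_ne_zero hg hg1
  refine ContinuousAt.congr ?_ ((continuousAt_snd.eventually_ne hg1).mono
    fun q' hq' ↦ (calE_of_ne_one q'.1 hq').symm)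
  fun_prop (disch := assumption)

lemma continuousAt_calE_zero_one : ContinuousAt (fun q : ℝ × ℝ ↦ calE q.1 q.2) (0, 1) := by
  have hbound : Tendsto (fun q : ℝ × ℝ ↦ √(crossingDiscr q.1 q.2) / (q.2 + 1)) (nhds (0, 1))
      (nhds 0) := by
    have h : ContinuousAt (fun q : ℝ × ℝ ↦ √(crossingDiscr q.1 q.2) / (q.2 + 1)) (0, 1) :=
      (continuousAt_sqrt_crossingDiscr one_ne_zero).div (by fun_prop) (by norm_num)
    simpa [ContinuousAt, crossingDiscr_one_right] using h
  have hpos : ∀ᶠ q : ℝ × ℝ in nhds (0, 1), 0 < q.2 :=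
    continuousAt_snd.eventually_const_lt one_pos
  rw [ContinuousAt, calE_one_right, abs_zero, zero_div, neg_zero, Phi_zero,
    tendsto_iff_dist_tendsto_zero]
  exact squeeze_zero' (.of_forall fun _ ↦ dist_nonneg)
    (hpos.mono fun q hq ↦ abs_calE_sub_half_le q.1 hq) hbound

lemma continuousAt_calE_one_of_pos {r : ℝ} (hr : 0 < r) :
    ContinuousAt (fun q : ℝ × ℝ ↦ calE q.1 q.2) (r, 1) := by
  have hbound : Tendsto (fun q : ℝ × ℝ ↦ |q.1 - √(crossingDiscr q.1 q.2)| / (q.2 + 1) / 2)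
      (nhds (r, 1)) (nhds 0) := by
    have h : ContinuousAt (fun q : ℝ × ℝ ↦ |q.1 - √(crossingDiscr q.1 q.2)| / (q.2 + 1) / 2)
        (r, 1) :=
      ((continuousAt_fst.sub (continuousAt_sqrt_crossingDiscr one_ne_zero)).abs.div
        (by fun_prop) (by norm_num)).div_const 2
    simpa [ContinuousAt, crossingDiscr_one_right, Real.sqrt_sq hr.le] using h
  have hpos : ∀ᶠ q : ℝ × ℝ in nhds (r, 1), 0 < q.1 ∧ 0 < q.2 :=
    prod_mem_nhds (Ioi_mem_nhds hr) (Ioi_mem_nhds one_pos)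
  have hnear : Tendsto (fun q : ℝ × ℝ ↦ nearThresholdError q.1 q.2) (nhds (r, 1))
      (nhds (calE r 1)) :=
    nearThresholdError_one_right hr ▸ continuousAt_nearThresholdError (q := (r, 1)) hr one_pos
  have hdiff : Tendsto (fun q : ℝ × ℝ ↦ calE q.1 q.2 - nearThresholdError q.1 q.2) (nhds (r, 1))
      (nhds 0) :=
    squeeze_zero_norm' (hpos.mono fun q hq ↦ abs_calE_sub_nearThresholdError_le hq.1 hq.2) hbound
  simpa [ContinuousAt] using hdiff.add hnear

lemma continuousAt_calE {q : ℝ × ℝ} (hg : 0 < q.2) :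
    ContinuousAt (fun q : ℝ × ℝ ↦ calE q.1 q.2) q := by
  obtain ⟨r, g⟩ := q
  rcases eq_or_ne g 1 with rfl | hg1
  · rcases lt_trichotomy r 0 with hr | rfl | hr
    · have h : ContinuousAt (fun q : ℝ × ℝ ↦ calE (-q.1) q.2) (r, 1) :=
        ContinuousAt.comp (x := (r, 1)) (f := fun q : ℝ × ℝ ↦ (-q.1, q.2))
          (continuousAt_calE_one_of_pos (neg_pos.2 hr)) (by fun_prop)
      simpa only [calE_neg_left] using h
    · exact continuousAt_calE_zero_one
    · exact continuousAt_calE_one_of_pos hr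
  · exact continuousAt_calE_of_ne_one hg hg1

theorem Evec_continuousOn_general {p : ℕ} (μ0 μ1 : Fin p → ℝ) (S0 S1 : Matrix (Fin p) (Fin p) ℝ) :
    ContinuousOn (Evec μ0 μ1 S0 S1) {α | 0 < α ⬝ᵥ S0 *ᵥ α ∧ 0 < α ⬝ᵥ S1 *ᵥ α} := by
  rintro α ⟨h0, h1⟩
  have hσ (S : Matrix (Fin p) (Fin p) ℝ) : Continuous fun α ↦ √(α ⬝ᵥ S *ᵥ α) := by fun_prop
  have hm (μ : Fin p → ℝ) : Continuous fun α ↦ α ⬝ᵥ μ := by fun_prop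
  have hσ1 : √(α ⬝ᵥ S1 *ᵥ α) ≠ 0 := (Real.sqrt_pos.2 h1).ne'
  have hr : ContinuousAt (fun α ↦ (α ⬝ᵥ μ0 - α ⬝ᵥ μ1) / √(α ⬝ᵥ S1 *ᵥ α)) α :=
    ((hm μ0).sub (hm μ1)).continuousAt.div (hσ S1).continuousAt hσ1
  have hg : ContinuousAt (fun α ↦ √(α ⬝ᵥ S0 *ᵥ α) / √(α ⬝ᵥ S1 *ᵥ α)) α :=
    (hσ S0).continuousAt.div (hσ S1).continuousAt hσ1
  have hg_pos : 0 < √(α ⬝ᵥ S0 *ᵥ α) / √(α ⬝ᵥ S1 *ᵥ α) :=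
    div_pos (Real.sqrt_pos.2 h0) (Real.sqrt_pos.2 h1)
  exact ((continuousAt_calE hg_pos).comp (hr.prodMk hg)).continuousWithinAt

/-- The classification error function E is continuous on ℝ^p \ {0}. -/
theorem Evec_continuousOn {p : ℕ} (hp : 1 ≤ p) (μ0 μ1 : Fin p → ℝ)
    (S0 S1 : Matrix (Fin p) (Fin p) ℝ) (h0 : S0.PosDef) (h1 : S1.PosDef) :
    ContinuousOn (Evec μ0 μ1 S0 S1) {α : Fin p → ℝ | α ≠ 0} := by
  exact (Evec_continuousOn_general μ0 μ1 S0 S1).mono fun α hα ↦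
    ⟨by simpa using h0.dotProduct_mulVec_pos hα, by simpa using h1.dotProduct_mulVec_pos hα⟩
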